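/- For all integers g ≥ 1 and natural numbers m, n, the subspace V₁^{(g,m,n)} is the internal direct sum of V₊^{(g,m,n)} and V₋^{(g,m,n)}: one has V₊^{(g,m,n)} ∩ V₋^{(g,m,n)} = {0} and V₊^{(g,m,n)} + V₋^{(g,m,n)} = V₁^{(g,m,n)}. -/

import Mathlib

open MvPolynomial

noncomputable section

/-- `K = ℂ(z₁,z₂)`, the field of rational functions in two variables over `ℂ`. -/
abbrev K2 : Type := FractionRing (MvPolynomial (Fin 2) ℂ)

/-- The rational function `z₁`. -/
def z1 : K2 := algebraMap (MvPolynomial (Fin 2) ℂ) K2 (X 0)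

/-- The rational function `z₂`. -/
def z2 : K2 := algebraMap (MvPolynomial (Fin 2) ℂ) K2 (X 1)

/-- The conifold discriminant `Δ₁ = (1−432z₁)³ − 27·(432z₁)³·z₂`. -/
def Δ1 : K2 := (1 - 432 * z1) ^ 3 - 27 * (432 * z1) ^ 3 * z2

/-- The conifold discriminant `Δ₂ = 1 + 27z₂`. -/
def Δ2 : K2 := 1 + 27 * z2

/-- `V₀^{(g,m,n)}`: the ℂ-span of `z₁^k (1/432−z₁)^{m−k} z₂^n (Δ₁Δ₂)^{−(2g−2)}` for `0 ≤ k ≤ m`. -/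
def V0 (g : ℤ) (m n : ℕ) : Submodule ℂ K2 :=
  Submodule.span ℂ
    {f : K2 | ∃ k : ℕ, k ≤ m ∧
      f = z1 ^ k * (1 / 432 - z1) ^ (m - k) * z2 ^ n * (Δ1 * Δ2) ^ (-(2 * g - 2))}

/-- `V₁^{(g,m,n)} = {f ∈ V₀^{(g,m,n)} : ι(f) ∈ V₀^{(g,m,n)}}`. -/
def V1 (ι : K2 →ₐ[ℂ] K2) (g : ℤ) (m n : ℕ) : Submodule ℂ K2 :=
  V0 g m n ⊓ (V0 g m n).comap ι.toLinearMap

/-- `V₊^{(g,m,n)}`: the ℂ-span of `z₁^{k₁}(1/432−z₁)^{k₂} z₂^n (Δ₁Δ₂)^{−(2g−2)}`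
over all `k₁, k₂ ≥ 0` with `k₁+k₂ ≤ m` and `k₁−k₂ = 3n−6g+6`. -/
def Vplus (g : ℤ) (m n : ℕ) : Submodule ℂ K2 :=
  Submodule.span ℂ
    {f : K2 | ∃ k₁ k₂ : ℕ, k₁ + k₂ ≤ m ∧ (k₁ : ℤ) - k₂ = 3 * n - 6 * g + 6 ∧
      f = z1 ^ k₁ * (1 / 432 - z1) ^ k₂ * z2 ^ n * (Δ1 * Δ2) ^ (-(2 * g - 2))}

/-- `V₋^{(g,m,n)}`: the ℂ-span of `(1/432−2z₁)·z₁^{k₁}(1/432−z₁)^{k₂} z₂^n (Δ₁Δ₂)^{−(2g−2)}`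
over all `k₁, k₂ ≥ 0` with `k₁+k₂ ≤ m−1` and `k₁−k₂ = 3n−6g+6`. -/
def Vminus (g : ℤ) (m n : ℕ) : Submodule ℂ K2 :=
  Submodule.span ℂ
    {f : K2 | ∃ k₁ k₂ : ℕ, k₁ + k₂ + 1 ≤ m ∧ (k₁ : ℤ) - k₂ = 3 * n - 6 * g + 6 ∧
      f = (1 / 432 - 2 * z1) * z1 ^ k₁ * (1 / 432 - z1) ^ k₂ * z2 ^ n *
            (Δ1 * Δ2) ^ (-(2 * g - 2))}

local notation "yy" => ((1 / 432 : K2) - z1)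

lemma aux_inj : Function.Injective (Polynomial.aeval (R := ℂ) z1) := by
  have h : Transcendental ℂ z1 := by
    unfold z1
    rw [transcendental_algebraMap_iff (IsFractionRing.injective _ _)]
    exact MvPolynomial.transcendental_X ℂ 0
  exact transcendental_iff_injective.mp h

/-- the polynomial `1/432 - X` -/
def polY : Polynomial ℂ := Polynomial.C (1 / 432) - Polynomial.X

lemma aeval_polY : Polynomial.aeval z1 polY = yy := by
  simp only [polY, map_sub, Polynomial.aeval_C, Polynomial.aeval_X, map_div₀, map_one, map_ofNat]

lemma polY_natDegree : polY.natDegree = 1 := by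
  have : polY = -(Polynomial.X - Polynomial.C (1 / 432)) := by unfold polY; ring
  rw [this, Polynomial.natDegree_neg, Polynomial.natDegree_X_sub_C]

lemma polY_ne : polY ≠ 0 := by
  intro h
  have := polY_natDegree
  simp [h] at this

lemma polY_comp : polY.comp polY = Polynomial.X := by
  simp [polY]

lemma polY_coprime : IsCoprime (Polynomial.X : Polynomial ℂ) polY := by
  refine ⟨Polynomial.C 432, Polynomial.C 432, ?_⟩
  rw [← mul_add]
  simp only [polY, add_sub_cancel]
  rw [← Polynomial.C_mul]
  norm_num

lemma z1_ne : z1 ≠ 0 := by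
  intro h
  have : Polynomial.X = (0 : Polynomial ℂ) := aux_inj (by simp [h])
  exact Polynomial.X_ne_zero this

lemma yy_ne : yy ≠ 0 := by
  intro h
  exact polY_ne (aux_inj (by rw [aeval_polY, h, map_zero]))

lemma z2_ne : z2 ≠ 0 := by
  unfold z2
  rw [Ne, FaithfulSMul.algebraMap_eq_zero_iff]
  exact MvPolynomial.X_ne_zero 1

lemma Δ2_ne : Δ2 ≠ 0 := by
  intro h
  have h' : algebraMap (MvPolynomial (Fin 2) ℂ) K2 (1 + 27 * X 1) = 0 := by
    rw [← h]; simp only [Δ2, z2, map_add, map_mul, map_one, map_ofNat]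
  rw [FaithfulSMul.algebraMap_eq_zero_iff] at h'
  have := congrArg (MvPolynomial.eval (fun _ => (0 : ℂ))) h'
  simp at this

lemma Δ1_ne : Δ1 ≠ 0 := by
  intro h
  have h' : algebraMap (MvPolynomial (Fin 2) ℂ) K2
      ((1 - 432 * X 0) ^ 3 - 27 * (432 * X 0) ^ 3 * X 1) = 0 := by
    rw [← h]; simp only [Δ1, z1, z2, map_sub, map_mul, map_pow, map_one, map_ofNat]
  rw [FaithfulSMul.algebraMap_eq_zero_iff] at h'
  have := congrArg (MvPolynomial.eval (fun _ => (0 : ℂ))) h'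
  simp at this

lemma iota_smul (ι : K2 →ₐ[ℂ] K2) (c : ℂ) (a : K2) : ι (c • a) = c • ι a := by
  rw [Algebra.smul_def, map_mul, AlgHom.commutes, ← Algebra.smul_def]

/-- the common factor -/
def ww (g : ℤ) (n : ℕ) : K2 := z2 ^ n * (Δ1 * Δ2) ^ (-(2 * g - 2))

lemma ww_ne (g : ℤ) (n : ℕ) : ww g n ≠ 0 :=
  mul_ne_zero (pow_ne_zero _ z2_ne) (zpow_ne_zero _ (mul_ne_zero Δ1_ne Δ2_ne))

lemma iota_y (ι : K2 →ₐ[ℂ] K2) (h1 : ι z1 = 1 / 432 - z1) : ι yy = z1 := by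
  rw [map_sub, h1, map_div₀, map_one, map_ofNat]; ring

lemma iota_z2 (ι : K2 →ₐ[ℂ] K2) (h1 : ι z1 = 1 / 432 - z1)
    (h2 : ι z2 = -((432 * z1) ^ 3 * z2) / (1 - 432 * z1) ^ 3)
    : ι z2 = -((z1 / yy) ^ 3 * z2) := by
  have hy := yy_ne
  have e : (1 - 432 * z1 : K2) = 432 * yy := by ring
  rw [h2, e]
  field_simp

lemma iota_Δ (ι : K2 →ₐ[ℂ] K2) (h1 : ι z1 = 1 / 432 - z1)
    (h2 : ι z2 = -((432 * z1) ^ 3 * z2) / (1 - 432 * z1) ^ 3)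
    : ι (Δ1 * Δ2) = (z1 / yy) ^ 3 * (Δ1 * Δ2) := by
  have hy := yy_ne
  have e1 : Δ1 = 432 ^ 3 * (yy ^ 3 - 27 * z1 ^ 3 * z2) := by unfold Δ1; ring
  have hz := iota_z2 ι h1 h2
  have hyy := iota_y ι h1
  have e2 : Δ2 = 1 + 27 * z2 := rfl
  rw [e1, e2]
  simp only [map_mul, map_add, map_pow, map_ofNat, map_one]
  rw [map_sub ι (yy ^ 3)]
  simp only [map_mul, map_pow, map_ofNat, hyy, hz]
  rw [h1]
  generalize yy = y at *
  field_simp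
  ring

lemma iota_w (ι : K2 →ₐ[ℂ] K2) (h1 : ι z1 = 1 / 432 - z1)
    (h2 : ι z2 = -((432 * z1) ^ 3 * z2) / (1 - 432 * z1) ^ 3)
    (g : ℤ) (n : ℕ) :
    ι (ww g n) = (-1) ^ n * (z1 / yy) ^ (3 * (n : ℤ) - 6 * g + 6) * ww g n := by
  have hx : z1 / yy ≠ 0 := div_ne_zero z1_ne yy_ne
  unfold ww
  rw [map_mul, map_pow, map_zpow₀, iota_Δ ι h1 h2, iota_z2 ι h1 h2]
  generalize z1 / yy = t at *
  rw [mul_zpow, neg_pow, mul_pow]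
  have : t ^ (3 * (n : ℤ) - 6 * g + 6) = (t ^ 3) ^ n * (t ^ 3) ^ (-(2 * g - 2)) := by
    rw [← zpow_natCast, ← zpow_natCast t 3, ← zpow_mul, ← zpow_mul, ← zpow_add₀ hx]
    congr 1; push_cast; ring
  rw [this]; ring

lemma iota_gen (ι : K2 →ₐ[ℂ] K2) (h1 : ι z1 = 1 / 432 - z1)
    (h2 : ι z2 = -((432 * z1) ^ 3 * z2) / (1 - 432 * z1) ^ 3)
    (g : ℤ) (n k₁ k₂ : ℕ) (hk : (k₁ : ℤ) - k₂ = 3 * n - 6 * g + 6) :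
    ι (z1 ^ k₁ * yy ^ k₂ * ww g n) = (-1) ^ n * (z1 ^ k₁ * yy ^ k₂ * ww g n) := by
  have hx := z1_ne
  have hy := yy_ne
  rw [map_mul, map_mul, map_pow, map_pow, iota_y ι h1, iota_w ι h1 h2, h1, ← hk]
  rw [zpow_sub₀ (div_ne_zero hx hy), zpow_natCast, zpow_natCast, div_pow, div_pow]
  generalize yy = y at *
  field_simp

lemma iota_plus (ι : K2 →ₐ[ℂ] K2) (h1 : ι z1 = 1 / 432 - z1)
    (h2 : ι z2 = -((432 * z1) ^ 3 * z2) / (1 - 432 * z1) ^ 3)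
    (g : ℤ) (m n : ℕ) (f : K2) (hf : f ∈ Vplus g m n) :
    ι f = (-1) ^ n * f := by
  unfold Vplus at hf
  induction hf using Submodule.span_induction with
  | mem f hf =>
    obtain ⟨k₁, k₂, -, hk, rfl⟩ := hf
    have := iota_gen ι h1 h2 g n k₁ k₂ hk
    simpa only [ww, mul_assoc] using this
  | zero => simp
  | add a b _ _ ha hb => rw [map_add, ha, hb]; ring
  | smul c a _ ha => rw [iota_smul, ha, mul_smul_comm]

lemma iota_minus (ι : K2 →ₐ[ℂ] K2) (h1 : ι z1 = 1 / 432 - z1)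
    (h2 : ι z2 = -((432 * z1) ^ 3 * z2) / (1 - 432 * z1) ^ 3)
    (g : ℤ) (m n : ℕ) (f : K2) (hf : f ∈ Vminus g m n) :
    ι f = -((-1) ^ n * f) := by
  unfold Vminus at hf
  induction hf using Submodule.span_induction with
  | mem f hf =>
    obtain ⟨k₁, k₂, -, hk, rfl⟩ := hf
    have := iota_gen ι h1 h2 g n k₁ k₂ hk
    have e : (1 / 432 - 2 * z1) * z1 ^ k₁ * yy ^ k₂ * z2 ^ n * (Δ1 * Δ2) ^ (-(2 * g - 2))
      = (yy - z1) * (z1 ^ k₁ * yy ^ k₂ * ww g n) := by unfold ww; ring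
    rw [e, map_mul, this, map_sub, iota_y ι h1, h1]
    ring
  | zero => simp
  | add a b _ _ ha hb => rw [map_add, ha, hb]; ring
  | smul c a _ ha => rw [iota_smul, ha, mul_smul_comm, smul_neg]

lemma smul432 (a : K2) : (432 : ℂ) • a = 432 * a := by
  rw [Algebra.smul_def, map_ofNat]

lemma mem_V0 (g : ℤ) (m n : ℕ) (d : ℕ) : ∀ k₁ k₂ : ℕ, k₁ + k₂ + d = m →
    z1 ^ k₁ * yy ^ k₂ * ww g n ∈ V0 g m n := by
  induction d with
  | zero =>
    intro k₁ k₂ h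
    refine Submodule.subset_span ⟨k₁, by omega, ?_⟩
    rw [show m - k₁ = k₂ by omega]; unfold ww; ring
  | succ d ih =>
    intro k₁ k₂ h
    have e : z1 ^ k₁ * yy ^ k₂ * ww g n = (432 : ℂ) •
      (z1 ^ (k₁ + 1) * yy ^ k₂ * ww g n + z1 ^ k₁ * yy ^ (k₂ + 1) * ww g n) := by
      rw [smul432]; ring
    rw [e]
    exact Submodule.smul_mem _ _ (Submodule.add_mem _ (ih _ _ (by omega)) (ih _ _ (by omega)))

lemma plus_le (g : ℤ) (m n : ℕ) : Vplus g m n ≤ V0 g m n := by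
  unfold Vplus
  rw [Submodule.span_le]
  rintro f ⟨k₁, k₂, h, -, rfl⟩
  rw [SetLike.mem_coe]
  have := mem_V0 g m n (m - (k₁ + k₂)) k₁ k₂ (by omega)
  simpa only [ww, mul_assoc] using this

lemma minus_le (g : ℤ) (m n : ℕ) : Vminus g m n ≤ V0 g m n := by
  unfold Vminus
  rw [Submodule.span_le]
  rintro f ⟨k₁, k₂, h, -, rfl⟩
  rw [SetLike.mem_coe]
  have a := mem_V0 g m n (m - (k₁ + k₂ + 1)) (k₁ + 1) k₂ (by omega)
  have b := mem_V0 g m n (m - (k₁ + k₂ + 1)) k₁ (k₂ + 1) (by omega)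
  have := Submodule.sub_mem _ b a
  convert this using 1
  unfold ww; ring

lemma V0_poly (g : ℤ) (m n : ℕ) (f : K2) (hf : f ∈ V0 g m n) :
    ∃ p : Polynomial ℂ, p.natDegree ≤ m ∧ f = Polynomial.aeval z1 p * ww g n := by
  unfold V0 at hf
  induction hf using Submodule.span_induction with
  | mem f hf =>
    obtain ⟨k, hk, rfl⟩ := hf
    refine ⟨Polynomial.X ^ k * polY ^ (m - k), ?_, ?_⟩
    · refine Polynomial.natDegree_mul_le.trans ?_
      rw [Polynomial.natDegree_pow, Polynomial.natDegree_pow, polY_natDegree,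
        Polynomial.natDegree_X]
      omega
    · simp only [map_mul, map_pow, aeval_polY, Polynomial.aeval_X, ww]; ring
  | zero => exact ⟨0, by simp⟩
  | add a b _ _ ha hb =>
    obtain ⟨p, hp, rfl⟩ := ha
    obtain ⟨q, hq, rfl⟩ := hb
    exact ⟨p + q, Polynomial.natDegree_add_le_of_degree_le hp hq, by rw [map_add]; ring⟩
  | smul c a _ ha =>
    obtain ⟨p, hp, rfl⟩ := ha
    exact ⟨c • p, (Polynomial.natDegree_smul_le _ _).trans hp, by
      rw [map_smul, smul_mul_assoc]⟩

lemma mem_sup (g : ℤ) (m n : ℕ) (i : ℕ) : ∀ k₁ k₂ : ℕ, i + k₁ + k₂ ≤ m →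
    (k₁ : ℤ) - k₂ = 3 * n - 6 * g + 6 →
    z1 ^ i * (z1 ^ k₁ * yy ^ k₂ * ww g n) ∈ Vplus g m n ⊔ Vminus g m n := by
  induction i using Nat.twoStepInduction with
  | zero =>
    intro k₁ k₂ h hk
    refine Submodule.mem_sup_left (Submodule.subset_span ⟨k₁, k₂, by omega, hk, ?_⟩)
    unfold ww; ring
  | one =>
    intro k₁ k₂ h hk
    have a : z1 ^ k₁ * yy ^ k₂ * z2 ^ n * (Δ1 * Δ2) ^ (-(2 * g - 2)) ∈
      Vplus g m n ⊔ Vminus g m n :=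
      Submodule.mem_sup_left (Submodule.subset_span ⟨k₁, k₂, by omega, hk, rfl⟩)
    have b : (1 / 432 - 2 * z1) * z1 ^ k₁ * yy ^ k₂ * z2 ^ n * (Δ1 * Δ2) ^ (-(2 * g - 2)) ∈
      Vplus g m n ⊔ Vminus g m n :=
      Submodule.mem_sup_right (Submodule.subset_span ⟨k₁, k₂, by omega, hk, rfl⟩)
    have := Submodule.sub_mem _ (Submodule.smul_mem _ (1 / 864 : ℂ) a)
      (Submodule.smul_mem _ (1 / 2 : ℂ) b)
    convert this using 1
    simp only [Algebra.smul_def, map_div₀, map_one, map_ofNat, ww]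
    ring
  | more i ih0 ih1 =>
    intro k₁ k₂ h hk
    have a := ih1 k₁ k₂ (by omega) hk
    have b := ih0 (k₁ + 1) (k₂ + 1) (by omega) (by push_cast; linarith)
    have := Submodule.sub_mem _ (Submodule.smul_mem _ (1 / 432 : ℂ) a) b
    convert this using 1
    simp only [Algebra.smul_def, map_div₀, map_one, map_ofNat]
    ring

lemma V1_le (ι : K2 →ₐ[ℂ] K2) (h1 : ι z1 = 1 / 432 - z1)
    (h2 : ι z2 = -((432 * z1) ^ 3 * z2) / (1 - 432 * z1) ^ 3)
    (g : ℤ) (m n : ℕ) (f : K2) (hf : f ∈ V0 g m n) (hf' : ι f ∈ V0 g m n) :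
    f ∈ Vplus g m n ⊔ Vminus g m n := by
  have hx := z1_ne
  have hy := yy_ne
  obtain ⟨p, hp, rfl⟩ := V0_poly g m n f hf
  obtain ⟨q, hq, hpq⟩ := V0_poly g m n _ hf'
  obtain ⟨k₁, k₂, hk, hk0⟩ : ∃ k₁ k₂ : ℕ, (k₁ : ℤ) - k₂ = 3 * n - 6 * g + 6 ∧
      (k₁ = 0 ∨ k₂ = 0) :=
    ⟨(3 * (n : ℤ) - 6 * g + 6).toNat, (-(3 * (n : ℤ) - 6 * g + 6)).toNat, by omega, by omega⟩
  have hcomp : ι (Polynomial.aeval z1 p) = Polynomial.aeval z1 (p.comp polY) := by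
    rw [Polynomial.aeval_comp, aeval_polY, ← h1, Polynomial.aeval_algHom_apply]
  rw [map_mul, hcomp, iota_w ι h1 h2, ← hk, zpow_sub₀ (div_ne_zero hx hy), zpow_natCast,
    zpow_natCast, div_pow, div_pow, ← mul_assoc] at hpq
  replace hpq := mul_right_cancel₀ (ww_ne g n) hpq
  have key : Polynomial.aeval z1 (p.comp polY * (Polynomial.X ^ k₁ * polY ^ k₂)) =
      Polynomial.aeval z1 ((Polynomial.X ^ k₂ * polY ^ k₁) * ((-1) ^ n * q)) := by
    have e : ((-1 : K2) ^ n) * (-1) ^ n = 1 := by rw [← mul_pow]; simp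
    simp only [map_mul, map_pow, aeval_polY, Polynomial.aeval_X, map_neg, map_one, ← hpq]
    generalize Polynomial.aeval z1 (p.comp polY) = P
    generalize yy = y at *
    generalize (-1 : K2) ^ n = s at *
    field_simp
    linear_combination (-P) * e
  replace key := aux_inj key
  have cop : IsCoprime (Polynomial.X ^ k₂ * polY ^ k₁) (Polynomial.X ^ k₁ * polY ^ k₂) := by
    rcases hk0 with rfl | rfl
    · simpa using polY_coprime.pow
    · simpa using polY_coprime.symm.pow
  have dvd : Polynomial.X ^ k₂ * polY ^ k₁ ∣ p.comp polY :=
    cop.dvd_of_dvd_mul_right ⟨_, key⟩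
  obtain ⟨r, hr⟩ := dvd
  have hp2 : p = (Polynomial.X ^ k₁ * polY ^ k₂) * r.comp polY := by
    have := congrArg (fun t => Polynomial.comp t polY) hr
    simp only [Polynomial.comp_assoc, polY_comp, Polynomial.comp_X, Polynomial.mul_comp,
      Polynomial.pow_comp, Polynomial.X_comp] at this
    rw [this]; ring
  generalize r.comp polY = s at hp2
  by_cases hs : s = 0
  · simp [hp2, hs]
  have hdeg : k₁ + k₂ + s.natDegree ≤ m := by
    rw [hp2, Polynomial.natDegree_mul (mul_ne_zero (pow_ne_zero _ Polynomial.X_ne_zero)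
      (pow_ne_zero _ polY_ne)) hs, Polynomial.natDegree_mul (pow_ne_zero _ Polynomial.X_ne_zero)
      (pow_ne_zero _ polY_ne), Polynomial.natDegree_pow, Polynomial.natDegree_pow,
      polY_natDegree, Polynomial.natDegree_X] at hp
    omega
  have e : Polynomial.aeval z1 p * ww g n =
      Polynomial.aeval z1 s * (z1 ^ k₁ * yy ^ k₂ * ww g n) := by
    rw [hp2]
    simp only [map_mul, map_pow, aeval_polY, Polynomial.aeval_X]
    ring
  rw [e, Polynomial.aeval_eq_sum_range, Finset.sum_mul]
  refine Submodule.sum_mem _ fun i hi => ?_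
  rw [smul_mul_assoc]
  rw [Finset.mem_range] at hi
  exact Submodule.smul_mem _ _ (mem_sup g m n i k₁ k₂ (by omega) hk)

/-- `V₁^{(g,m,n)}` is the internal direct sum of `V₊^{(g,m,n)}` and `V₋^{(g,m,n)}`. -/
theorem V1_direct_sum (ι : K2 →ₐ[ℂ] K2)
    (h1 : ι z1 = 1 / 432 - z1)
    (h2 : ι z2 = -((432 * z1) ^ 3 * z2) / (1 - 432 * z1) ^ 3)
    (g : ℤ) (hg : 1 ≤ g) (m n : ℕ) :
    Vplus g m n ⊓ Vminus g m n = ⊥ ∧ Vplus g m n ⊔ Vminus g m n = V1 ι g m n := by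
  constructor
  · rw [eq_bot_iff]
    rintro f ⟨ha, hb⟩
    have a := iota_plus ι h1 h2 g m n f ha
    have b := iota_minus ι h1 h2 g m n f hb
    rw [a, self_eq_neg] at b
    rw [Submodule.mem_bot]
    exact (mul_eq_zero.mp b).resolve_left (pow_ne_zero _ (by simp))
  · apply le_antisymm
    · have e : ∀ f : K2, f ∈ V0 g m n → (-1) ^ n * f ∈ V0 g m n := by
        intro f hf
        rcases neg_one_pow_eq_or K2 n with h | h <;> rw [h] <;> simpa using hf
      refine sup_le (fun f hf => ⟨plus_le g m n hf, ?_⟩) (fun f hf => ⟨minus_le g m n hf, ?_⟩)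
      · change ι f ∈ V0 g m n
        rw [iota_plus ι h1 h2 g m n f hf]
        exact e _ (plus_le g m n hf)
      · change ι f ∈ V0 g m n
        rw [iota_minus ι h1 h2 g m n f hf]
        exact Submodule.neg_mem _ (e _ (minus_le g m n hf))
    · rintro f ⟨ha, hb⟩
      exact V1_le ι h1 h2 g m n f ha hb


end
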